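/- arXiv:2407.13636 — 2 statements merged into one kernel-verified Lean document; each statement's English description precedes it below -/
import Mathlib

section
/- For every l ∈ [0, s]: a_l = (1/p^l) · Σ_{I ⊆ [0, l], l ∈ I} (-1)^{|I|+1} · b(min I) · N(s−I). -/
open Pointwise

/-- `chainCount G p s I` is the number `N(s - I)` of chains of `p`-subgroups of `G`:
for `I = {c₁ > c₂ > … > c_k} ⊆ [0, s]`, this counts tuples `U₁ ≤ U₂ ≤ … ≤ U_k ≤ G`
with `|U_i| = p^(s - c_i)`. -/
noncomputable def chainCount (G : Type*) [Group G] (p s : ℕ) (I : Finset ℕ) : ℕ :=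
  Nat.card {f : I → Subgroup G //
    (∀ i j : I, (i : ℕ) ≤ (j : ℕ) → f j ≤ f i) ∧
    ∀ i : I, Nat.card (f i) = p ^ (s - (i : ℕ))}

/-- `orbitCount G p s t n k` is the number `a_k` of orbits of length `p^(t-s+k)·n`
of the action of `G` on its `p^s`-element subsets by left multiplication. -/
noncomputable def orbitCount (G : Type*) [Group G] (p s t n k : ℕ) : ℕ :=
  Nat.card {O : Set (Set G) //
    (∃ M : Set G, Nat.card M = p ^ s ∧ O = MulAction.orbit G M) ∧
    Nat.card O = p ^ (t - s + k) * n}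

/-- `bCoeff p t s n k` is the binomial coefficient `b(k) = C(p^(t-s+k)·n - 1, p^k - 1)`,
as an integer. -/
def bCoeff (p t s n k : ℕ) : ℤ :=
  (Nat.choose (p ^ (t - s + k) * n - 1) (p ^ k - 1) : ℤ)

/-!
The proof is a Möbius inversion along chains of `p`-subgroups. The stabilizer `S` of a subset with
`p ^ s` elements has order `p ^ (s - c)` for some `c`. Count the chains indexed by `I` whose members
all lie in `S`. If `c < l`, adjoining `c` to `I` only adjoins `S` itself as the largest member, so
the alternating sum of these counts over the `I ⊆ [0, l]` with `l ∈ I` cancels in pairs; if `c = l`,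
only `I = {l}` contributes, and if `l < c`, there are no such chains. Hence the alternating sum
detects the stabilizers of order `p ^ (s - l)`. Summing over all subsets and exchanging the two
sums, each chain contributes the number of subsets fixed by its largest member `U`. These are the
unions of right cosets of `U`, so their number is a binomial coefficient depending only on `min I`.
-/

open MulAction

theorem sum_neg_one_pow_card_mul_eq_zero_of_insert {α R : Type*} [DecidableEq α] [Ring R]
    {𝒜 : Finset (Finset α)} {a : α} (h𝒜 : ∀ I, insert a I ∈ 𝒜 ↔ I ∈ 𝒜)
    {w : Finset α → R} (hw : ∀ I, w (insert a I) = w I) :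
    ∑ I ∈ 𝒜, (-1) ^ I.card * w I = 0 := by
  refine Finset.sum_involution (fun I _ => if a ∈ I then I.erase a else insert a I) ?_ ?_ ?_ ?_
  · intro I _
    by_cases ha : a ∈ I
    · have hI := hw (I.erase a)
      rw [Finset.insert_erase ha] at hI
      rw [if_pos ha, hI, ← Finset.card_erase_add_one ha, pow_succ, mul_neg_one, neg_mul,
        neg_add_cancel]
    · simp [ha, hw, pow_succ]
  · intro I _ _ hfix
    split_ifs at hfix with ha
    · exact Finset.notMem_erase a I (hfix.symm ▸ ha)
    · exact ha (hfix ▸ Finset.mem_insert_self a I)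
  · intro I hI
    split_ifs with ha
    · rwa [← h𝒜, Finset.insert_erase ha]
    · rwa [h𝒜]
  · intro I _
    by_cases ha : a ∈ I <;> simp [ha]

section Chains

variable {G : Type*} [Group G] {p s : ℕ}

/-- The chains counted by `chainCount`, as a set of families indexed by `I`. The family is antitone
because the member with index `i` has order `p ^ (s - i)`. -/
def subgroupChains (G : Type*) [Group G] (p s : ℕ) (I : Finset ℕ) : Set (I → Subgroup G) :=
  {f | Antitone f ∧ ∀ i : I, Nat.card (f i) = p ^ (s - (i : ℕ))}

theorem chainCount_eq_card_subgroupChains (G : Type*) [Group G] (p s : ℕ) (I : Finset ℕ) :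
    chainCount G p s I = Nat.card (subgroupChains G p s I) :=
  rfl

/-- The chains of a subgroup `S`, viewed as the chains of `G` whose members all lie in `S`. This
turns the counts below a stabilizer into values of `chainCount`. -/
def subgroupChainsEquivOfLe (S : Subgroup G) (p s : ℕ) (I : Finset ℕ) :
    subgroupChains S p s I ≃ {f : subgroupChains G p s I // ∀ i, f.1 i ≤ S} where
  toFun f := ⟨⟨fun i => (f.1 i).map S.subtype, fun _ _ hij => Subgroup.map_mono (f.2.1 hij),
    fun i => (Subgroup.card_subtype S (f.1 i)).trans (f.2.2 i)⟩, fun _ => Subgroup.map_subtype_le _⟩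
  invFun f := ⟨fun i => (f.1.1 i).subgroupOf S, fun _ _ hij => Subgroup.comap_mono (f.1.2.1 hij),
    fun i => (Nat.card_congr (Subgroup.subgroupOfEquivOfLe (f.2 i)).toEquiv).trans (f.1.2.2 i)⟩
  left_inv f := Subtype.ext <| funext fun i =>
    Subgroup.comap_map_eq_self_of_injective S.subtype_injective (f.1 i)
  right_inv f := Subtype.ext <| Subtype.ext <| funext fun i =>
    Subgroup.map_subgroupOf_eq_of_le (f.2 i)

theorem chainCount_empty : chainCount G p s ∅ = 1 := by
  have : Unique (subgroupChains G p s ∅) :=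
    ⟨⟨⟨isEmptyElim, fun i => isEmptyElim i, fun i => isEmptyElim i⟩⟩,
      fun f => Subtype.ext (Subsingleton.elim _ _)⟩
  rw [chainCount_eq_card_subgroupChains, Nat.card_unique]

variable [Finite G] {I : Finset ℕ} {c l : ℕ}

theorem chainCount_eq_zero_of_mem_of_lt (hp : 1 < p) (hc : c ≤ s) (hG : Nat.card G = p ^ (s - c))
    {i : ℕ} (hi : i ∈ I) (hic : i < c) : chainCount G p s I = 0 := by
  have : IsEmpty (subgroupChains G p s I) := ⟨fun ⟨f, _, hf⟩ => by
    have hle := Subgroup.card_le_card_group (f ⟨i, hi⟩)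
    rw [hf, hG, Nat.pow_le_pow_iff_right hp] at hle
    dsimp only at hle
    omega⟩
  rw [chainCount_eq_card_subgroupChains, Nat.card_of_isEmpty]

theorem chainCount_insert (hp : 0 < p) (hG : Nat.card G = p ^ (s - c)) :
    chainCount G p s (insert c I) = chainCount G p s I := by
  have eq_top_of_le {U : Subgroup G} {i : ℕ} (hi : i ≤ c) (hU : Nat.card U = p ^ (s - i)) :
      U = ⊤ := by
    refine Subgroup.eq_top_of_le_card U ?_
    rw [hG, hU]
    exact Nat.pow_le_pow_right hp (by omega)
  let restrict (f : subgroupChains G p s (insert c I)) : subgroupChains G p s I :=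
    ⟨fun i => f.1 ⟨i, Finset.mem_insert_of_mem i.2⟩, fun _ _ hij => f.2.1 hij, fun _ => f.2.2 _⟩
  refine Nat.card_eq_of_bijective restrict ⟨fun f g hfg => ?_, fun f => ?_⟩
  · refine Subtype.ext (funext fun ⟨i, hi⟩ => ?_)
    rcases Finset.mem_insert.mp hi with rfl | hiI
    · exact (eq_top_of_le le_rfl (f.2.2 ⟨i, hi⟩)).trans (eq_top_of_le le_rfl (g.2.2 ⟨i, hi⟩)).symm
    · exact congrFun (congrArg Subtype.val hfg) ⟨i, hiI⟩
  · obtain ⟨f, hf_anti, hf_card⟩ := f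
    let extend (i : (insert c I : Finset ℕ)) : Subgroup G :=
      if hi : i.1 ∈ I then f ⟨i, hi⟩ else ⊤
    have eq_of_notMem {i : (insert c I : Finset ℕ)} (hi : i.1 ∉ I) : i.1 = c :=
      (Finset.mem_insert.mp i.2).resolve_right hi
    have card_extend (i) : Nat.card (extend i) = p ^ (s - i.1) := by
      by_cases hi : i.1 ∈ I
      · simpa only [extend, hi, dite_true] using hf_card ⟨i, hi⟩
      · simp only [extend, dif_neg hi, Subgroup.card_top, hG, eq_of_notMem hi]
    have antitone_extend : Antitone extend := fun i j hij => by
      by_cases hj : j.1 ∈ I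
      · by_cases hi : i.1 ∈ I
        · simpa only [extend, hi, hj, dite_true] using hf_anti _ _ hij
        · simp only [extend, hi, dite_false, le_top]
      · have hic : i.1 ≤ c := le_of_le_of_eq hij (eq_of_notMem hj)
        exact le_top.trans_eq (eq_top_of_le hic (card_extend i)).symm
    exact ⟨⟨extend, antitone_extend, card_extend⟩,
      Subtype.ext (funext fun i => by simp [restrict, extend])⟩

theorem sum_neg_one_pow_mul_chainCount (hp : 1 < p) (hc : c ≤ s) (hG : Nat.card G = p ^ (s - c)) :
    ∑ I ∈ (Finset.range (l + 1)).powerset.filter (fun I => l ∈ I),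
      (-1 : ℤ) ^ (I.card + 1) * chainCount G p s I = if c = l then 1 else 0 := by
  rcases lt_trichotomy c l with hcl | rfl | hlc
  · have toggle_mem (I : Finset ℕ) : insert c I ∈ (Finset.range (l + 1)).powerset.filter (l ∈ ·) ↔
        I ∈ (Finset.range (l + 1)).powerset.filter (l ∈ ·) := by
      simp [Finset.insert_subset_iff, hcl.ne', hcl.le]
    have hsum := sum_neg_one_pow_card_mul_eq_zero_of_insert (R := ℤ) toggle_mem
      (w := fun I => chainCount G p s I)
      (fun I => congrArg _ (chainCount_insert (zero_lt_one.trans hp) hG))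
    simpa only [pow_succ, mul_neg_one, neg_mul, Finset.sum_neg_distrib, neg_eq_zero, if_neg hcl.ne]
      using hsum
  · have chainCount_singleton : chainCount G p s {c} = 1 := by
      rw [← insert_empty_eq, chainCount_insert (zero_lt_one.trans hp) hG, chainCount_empty]
    rw [if_pos rfl, Finset.sum_eq_single {c}]
    · simp [chainCount_singleton]
    · intro I hI hne
      rw [Finset.mem_filter, Finset.mem_powerset] at hI
      obtain ⟨i, hi, hic⟩ : ∃ i ∈ I, i ≠ c := by
        contrapose! hne
        exact Finset.eq_singleton_iff_unique_mem.mpr ⟨hI.2, hne⟩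
      have hlt : i < c := lt_of_le_of_ne (Finset.mem_range_succ_iff.mp (hI.1 hi)) hic
      simp [chainCount_eq_zero_of_mem_of_lt hp hc hG hi hlt]
    · simp
  · rw [if_neg hlc.ne']
    refine Finset.sum_eq_zero fun I hI => ?_
    simp [chainCount_eq_zero_of_mem_of_lt hp hc hG (Finset.mem_filter.mp hI).2 hlc]

end Chains

section Stabilizers

variable {G X : Type*} [Group G] [Finite G] [MulAction G X] {p s : ℕ}

-- Both sides count pairs of a chain and a point fixed by its largest member, which is indexed by
-- `I.min' hI`.
theorem sum_chainCount_stabilizer [Fintype X] {I : Finset ℕ} (hI : I.Nonempty) {N : ℕ}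
    (hN : ∀ U : Subgroup G, Nat.card U = p ^ (s - I.min' hI) → Nat.card (fixedPoints U X) = N) :
    ∑ x : X, chainCount (stabilizer G x) p s I = chainCount G p s I * N := by
  have := Fintype.ofFinite (subgroupChains G p s I)
  let m : I := ⟨I.min' hI, I.min'_mem hI⟩
  have le_stabilizer_iff (f : subgroupChains G p s I) (x : X) :
      (∀ i, f.1 i ≤ stabilizer G x) ↔ x ∈ fixedPoints (f.1 m) X :=
    ⟨fun h u => h m u.2, fun h i u hu => h ⟨u, f.2.1 (I.min'_le i i.2) hu⟩⟩
  calc ∑ x : X, chainCount (stabilizer G x) p s I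
    _ = ∑ x : X, Nat.card {f : subgroupChains G p s I // x ∈ fixedPoints (f.1 m) X} :=
      Finset.sum_congr rfl fun x _ => Nat.card_congr <|
        (subgroupChainsEquivOfLe (stabilizer G x) p s I).trans <|
          Equiv.subtypeEquivRight fun f => le_stabilizer_iff f x
    _ = ∑ f : subgroupChains G p s I, Nat.card (fixedPoints (f.1 m) X) := by
      rw [← Nat.card_sigma, ← Nat.card_sigma]
      exact Nat.card_congr ⟨fun z => ⟨z.2.1, z.1, z.2.2⟩, fun z => ⟨z.2.1, z.1, z.2.2⟩,
        fun _ => rfl, fun _ => rfl⟩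
    _ = chainCount G p s I * N := by
      rw [Finset.sum_congr rfl fun f _ => hN _ (f.2.2 m), Finset.sum_const, smul_eq_mul,
        Finset.card_univ, ← Nat.card_eq_fintype_card, chainCount_eq_card_subgroupChains]

theorem card_stabilizer_eq_alternating_sum [Finite X] {l : ℕ} (hp : p.Prime) (hl : l ≤ s)
    (hX : ∀ x : X, Nat.card (stabilizer G x) ∣ p ^ s) {F : ℕ → ℕ}
    (hF : ∀ m ≤ s, ∀ U : Subgroup G, Nat.card U = p ^ (s - m) → Nat.card (fixedPoints U X) = F m) :
    (Nat.card {x : X // Nat.card (stabilizer G x) = p ^ (s - l)} : ℤ) =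
      ∑ I ∈ ((Finset.range (l + 1)).powerset.filter (fun I => l ∈ I)).attach,
        (-1 : ℤ) ^ (I.1.card + 1) * F (I.1.min' ⟨l, (Finset.mem_filter.mp I.2).2⟩) *
          chainCount G p s I.1 := by
  have := Fintype.ofFinite X
  have indicator_eq_sum (x : X) :
      (if Nat.card (stabilizer G x) = p ^ (s - l) then 1 else 0 : ℤ) =
        ∑ I ∈ (Finset.range (l + 1)).powerset.filter (fun I => l ∈ I),
          (-1 : ℤ) ^ (I.card + 1) * chainCount (stabilizer G x) p s I := by
    obtain ⟨k, hk, hcard⟩ := (Nat.dvd_prime_pow hp).mp (hX x)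
    rw [sum_neg_one_pow_mul_chainCount (c := s - k) hp.one_lt (Nat.sub_le s k)
      (by rw [hcard, Nat.sub_sub_self hk]), hcard]
    refine if_congr ?_ rfl rfl
    rw [Nat.pow_right_inj hp.one_lt]
    omega
  calc (Nat.card {x : X // Nat.card (stabilizer G x) = p ^ (s - l)} : ℤ)
    _ = ∑ x : X, if Nat.card (stabilizer G x) = p ^ (s - l) then 1 else 0 := by
      classical
      rw [Finset.sum_boole, Nat.card_eq_fintype_card, Fintype.card_subtype]
    _ = ∑ I ∈ (Finset.range (l + 1)).powerset.filter (fun I => l ∈ I),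
          (-1 : ℤ) ^ (I.card + 1) * ∑ x : X, (chainCount (stabilizer G x) p s I : ℤ) := by
      simp only [indicator_eq_sum, Finset.mul_sum]
      exact Finset.sum_comm
    _ = _ := by
      rw [← Finset.sum_attach]
      refine Finset.sum_congr rfl fun I _ => ?_
      have hlI : l ∈ I.1 := (Finset.mem_filter.mp I.2).2
      have hmin : I.1.min' ⟨l, hlI⟩ ≤ s := (I.1.min'_le l hlI).trans hl
      rw [← Nat.cast_sum, sum_chainCount_stabilizer ⟨l, hlI⟩ (hF _ hmin)]
      push_cast
      ring

end Stabilizers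

section Orbits

variable {G X : Type*} [Group G] [MulAction G X]

theorem card_orbit_eq_iff_card_stabilizer_eq [Finite G] {a b : ℕ} (hG : Nat.card G = a * b)
    (x : X) : Nat.card (orbit G x) = a ↔ Nat.card (stabilizer G x) = b := by
  have orbit_stabilizer : Nat.card (orbit G x) * Nat.card (stabilizer G x) = a * b := by
    rw [← hG, Nat.card_coe_set_eq, ← index_stabilizer, Subgroup.index_mul_card]
  have hab : a * b ≠ 0 := hG ▸ Nat.card_pos.ne'
  constructor <;> intro h
  · rw [h] at orbit_stabilizer
    exact Nat.eq_of_mul_eq_mul_left (Nat.pos_of_ne_zero (left_ne_zero_of_mul hab)) orbit_stabilizer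
  · rw [h] at orbit_stabilizer
    exact Nat.eq_of_mul_eq_mul_right (Nat.pos_of_ne_zero (right_ne_zero_of_mul hab))
      orbit_stabilizer

theorem card_orbits_of_card_mul [Finite X] (A : SubMulAction G X) (N : ℕ) :
    Nat.card {O : Set X // (∃ x ∈ A, O = orbit G x) ∧ Nat.card O = N} * N =
      Nat.card {x : A // Nat.card (orbit G (x : X)) = N} := by
  let orbits := {O : Set X // (∃ x ∈ A, O = orbit G x) ∧ Nat.card O = N}
  have := Fintype.ofFinite orbits
  have eq_orbit (O : orbits) (x : O.1) : O.1 = orbit G (x : X) := by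
    obtain ⟨⟨_, ⟨y, _, rfl⟩, _⟩, x, hx⟩ := O, x
    exact (orbit_eq_iff.mpr hx).symm
  have mem_of_mem (O : orbits) (x : O.1) : (x : X) ∈ A := by
    obtain ⟨⟨_, ⟨y, hy, rfl⟩, _⟩, _, g, rfl⟩ := O, x
    exact A.smul_mem g hy
  let e : (Σ O : orbits, O.1) ≃ {x : A // Nat.card (orbit G (x : X)) = N} :=
    { toFun x := ⟨⟨x.2, mem_of_mem x.1 x.2⟩, eq_orbit x.1 x.2 ▸ x.1.2.2⟩
      invFun x := ⟨⟨orbit G (x.1 : X), ⟨x.1, x.1.2, rfl⟩, x.2⟩, x.1, mem_orbit_self _⟩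
      left_inv x := Sigma.subtype_ext (Subtype.ext (eq_orbit x.1 x.2).symm) rfl
      right_inv _ := rfl }
  rw [← Nat.card_congr e, Nat.card_sigma, Finset.sum_congr rfl fun O _ => O.2.2, Finset.sum_const,
    smul_eq_mul, Finset.card_univ, ← Nat.card_eq_fintype_card]

end Orbits

section Subsets

theorem card_set_natCard_eq {α : Type*} [Finite α] (m : ℕ) :
    Nat.card {T : Set α // Nat.card T = m} = (Nat.card α).choose m := by
  have := Fintype.ofFinite α
  rw [← Set.powersetCard.card]
  exact Nat.card_congr (Fintype.finsetEquivSet.subtypeEquiv fun T => by simp).symm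

/-- The `k`-element subsets of a `G`-set, with the pointwise action. For `k = 0` this also contains
the infinite subsets, because of the convention for `Nat.card`. -/
def subsetsOfCard (G α : Type*) [Group G] [MulAction G α] (k : ℕ) : SubMulAction G (Set α) where
  carrier := {M | Nat.card M = k}
  smul_mem' g M hM := (Set.natCard_smul_set g M).trans hM

variable {G : Type*} [Group G]

/-- The `U`-invariant subsets of `G` are the unions of right cosets of `U`. Taking inverses is
needed because `G ⧸ U` consists of left cosets. -/
def setQuotientEquivInvariantSets (U : Subgroup G) :
    Set (G ⧸ U) ≃ {M : Set G // U ≤ stabilizer G M} where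
  toFun T := ⟨((↑) ⁻¹' T : Set G)⁻¹, fun u hu => mem_stabilizer_set.mpr fun g => by
    simp only [Set.mem_inv, Set.mem_preimage, smul_eq_mul, mul_inv_rev,
      QuotientGroup.mk_mul_of_mem _ (U.inv_mem hu)]⟩
  invFun M := (↑) '' M.1⁻¹
  left_inv T := by
    simpa only [inv_inv] using Set.image_preimage_eq T QuotientGroup.mk_surjective
  right_inv M := by
    have mul_eq_self : (U : Set G) * M = M :=
      ((Set.mul_subset_mul_right (SetLike.coe_subset_coe.mpr M.2)).trans
        (stabilizer_mul_self M.1).subset).antisymm (Set.subset_mul_right _ U.one_mem)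
    refine Subtype.ext ?_
    change (((↑) : G → G ⧸ U) ⁻¹' ((↑) '' M.1⁻¹))⁻¹ = M.1
    rw [QuotientGroup.preimage_image_mk_eq_mul, mul_inv_rev, inv_inv, inv_coe_set, mul_eq_self]

theorem card_setQuotientEquivInvariantSets (U : Subgroup G) (T : Set (G ⧸ U)) :
    Nat.card (setQuotientEquivInvariantSets U T).1 = Nat.card U * Nat.card T :=
  (Set.natCard_inv _).trans (QuotientGroup.card_preimage_mk U T)

theorem card_stabilizer_dvd_card (M : Set G) : Nat.card (stabilizer G M) ∣ Nat.card M := by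
  obtain ⟨T, hT⟩ := (setQuotientEquivInvariantSets (stabilizer G M)).surjective ⟨M, le_rfl⟩
  exact ⟨Nat.card T, by rw [← card_setQuotientEquivInvariantSets, hT]⟩

theorem card_fixedPoints_subsetsOfCard [Finite G] (U : Subgroup G) {k m : ℕ}
    (hk : k = Nat.card U * m) :
    Nat.card (fixedPoints U (subsetsOfCard G G k)) = U.index.choose m := by
  rw [Subgroup.index, ← card_set_natCard_eq]
  have card_eq_iff (T : Set (G ⧸ U)) :
      Nat.card T = m ↔ Nat.card (setQuotientEquivInvariantSets U T).1 = k := by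
    rw [card_setQuotientEquivInvariantSets, hk, Nat.mul_right_inj Nat.card_pos.ne']
  calc Nat.card (fixedPoints U (subsetsOfCard G G k))
    _ = Nat.card {M : {M : Set G // U ≤ stabilizer G M} // Nat.card M.1 = k} := Nat.card_congr
      { toFun M := ⟨⟨M.1, fun u hu => congrArg Subtype.val (M.2 ⟨u, hu⟩)⟩, M.1.2⟩
        invFun M := ⟨⟨M.1, M.2⟩, fun u => Subtype.ext (M.1.2 u.2)⟩
        left_inv _ := rfl
        right_inv _ := rfl }
    _ = Nat.card {T : Set (G ⧸ U) // Nat.card T = m} :=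
      (Nat.card_congr ((setQuotientEquivInvariantSets U).subtypeEquiv card_eq_iff)).symm

end Subsets

theorem pow_mul_eq_pow_add_mul_mul_pow {p t n s m : ℕ} (hs : s ≤ t) (hm : m ≤ s) :
    p ^ t * n = p ^ (t - s + m) * n * p ^ (s - m) := by
  rw [mul_right_comm, ← pow_add]
  congr 2
  omega

theorem choose_eq_mul_bCoeff {p t n s m : ℕ} (hp : 0 < p) (hn : 0 < n) :
    ((p ^ (t - s + m) * n).choose (p ^ m) : ℤ) = p ^ (t - s) * n * bCoeff p t s n m := by
  have hpm : 0 < p ^ m := pow_pos hp m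
  have absorb := Nat.add_one_mul_choose_eq (p ^ (t - s + m) * n - 1) (p ^ m - 1)
  rw [Nat.sub_add_cancel (Nat.mul_pos (pow_pos hp _) hn), Nat.sub_add_cancel hpm] at absorb
  rw [bCoeff]
  norm_cast
  refine Nat.eq_of_mul_eq_mul_right hpm ?_
  rw [← absorb, pow_add]
  ring

section Counting

variable {G : Type*} [Group G] [Finite G] {p t n s : ℕ}

theorem card_fixedPoints_subsetsOfCard_pow (hp : 0 < p) (hG : Nat.card G = p ^ t * n) (hs : s ≤ t)
    {m : ℕ} (hm : m ≤ s) {U : Subgroup G} (hU : Nat.card U = p ^ (s - m)) :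
    Nat.card (fixedPoints U (subsetsOfCard G G (p ^ s))) =
      (p ^ (t - s + m) * n).choose (p ^ m) := by
  have card_eq : p ^ s = Nat.card U * p ^ m := by rw [hU, pow_sub_mul_pow p hm]
  have index_eq : U.index = p ^ (t - s + m) * n := by
    refine Nat.eq_of_mul_eq_mul_right (pow_pos hp (s - m)) ?_
    rw [← pow_mul_eq_pow_add_mul_mul_pow hs hm, ← hG, ← hU, U.index_mul_card]
  rw [card_fixedPoints_subsetsOfCard U card_eq, index_eq]

theorem orbitCount_mul_eq_card_stabilizer (hG : Nat.card G = p ^ t * n) (hs : s ≤ t) {l : ℕ}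
    (hl : l ≤ s) :
    orbitCount G p s t n l * (p ^ (t - s + l) * n) =
      Nat.card {M : subsetsOfCard G G (p ^ s) // Nat.card (stabilizer G M) = p ^ (s - l)} := by
  rw [pow_mul_eq_pow_add_mul_mul_pow hs hl] at hG
  refine (card_orbits_of_card_mul (subsetsOfCard G G (p ^ s)) _).trans <|
    Nat.card_congr <| Equiv.subtypeEquivRight fun M => ?_
  rw [SubMulAction.stabilizer_of_subMul, card_orbit_eq_iff_card_stabilizer_eq hG]

end Counting

theorem orbitCount_eq_alternating_sum_general {G : Type*} [Group G] [Finite G] (p t n s l : ℕ)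
    (hp : p.Prime) (hG : Nat.card G = p ^ t * n) (hs : s ≤ t) (hl : l ≤ s) :
    (orbitCount G p s t n l : ℤ) * p ^ l =
      ∑ I ∈ ((Finset.range (l + 1)).powerset.filter (fun I => l ∈ I)).attach,
        (-1 : ℤ) ^ (I.1.card + 1) *
          bCoeff p t s n (I.1.min' ⟨l, (Finset.mem_filter.mp I.2).2⟩) *
          (chainCount G p s I.1 : ℤ) := by
  have hn : 0 < n := Nat.pos_of_ne_zero (right_ne_zero_of_mul (hG ▸ Nat.card_pos.ne'))
  have hp0 : (p : ℤ) ≠ 0 := mod_cast hp.ne_zero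
  have stabilizer_dvd (M : subsetsOfCard G G (p ^ s)) : Nat.card (stabilizer G M) ∣ p ^ s :=
    (SubMulAction.stabilizer_of_subMul M ▸ card_stabilizer_dvd_card M.1).trans M.2.dvd
  have inversion := card_stabilizer_eq_alternating_sum hp hl stabilizer_dvd fun m hm U hU =>
    card_fixedPoints_subsetsOfCard_pow hp.pos hG hs hm hU
  rw [← orbitCount_mul_eq_card_stabilizer hG hs hl] at inversion
  refine mul_left_cancel₀ (by positivity : (p : ℤ) ^ (t - s) * n ≠ 0) ?_
  calc (p : ℤ) ^ (t - s) * n * (orbitCount G p s t n l * p ^ l)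
    _ = (orbitCount G p s t n l * (p ^ (t - s + l) * n) : ℕ) := by
      push_cast
      ring
    _ = _ := inversion
    _ = _ := by
      rw [Finset.mul_sum]
      refine Finset.sum_congr rfl fun I _ => ?_
      rw [choose_eq_mul_bCoeff hp.pos hn]
      ring

/-- The formula for the number `a_l` of orbits of length `p^(t-s+l)·n`:
`a_l = (1/p^l) · ∑_{I ⊆ [0,l], l ∈ I} (-1)^(|I|+1) · b(min I) · N(s - I)`,
stated multiplied through by `p^l`. -/
theorem orbitCount_eq_alternating_sum {G : Type*} [Group G] [Finite G] (p t n s l : ℕ)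
    (hp : p.Prime) (hG : Nat.card G = p ^ t * n) (hn : ¬ p ∣ n)
    (hs : s ≤ t) (hl : l ≤ s) :
    (orbitCount G p s t n l : ℤ) * p ^ l =
      ∑ I ∈ ((Finset.range (l + 1)).powerset.filter (fun I => l ∈ I)).attach,
        (-1 : ℤ) ^ (I.1.card + 1) *
          bCoeff p t s n (I.1.min' ⟨l, (Finset.mem_filter.mp I.2).2⟩) *
          (chainCount G p s I.1 : ℤ) :=
  orbitCount_eq_alternating_sum_general p t n s l hp hG hs hl
end

section
/- For s ∈ [1, t], the product N(s−1)·N(s) is congruent to N(s−1, s) modulo p^2; that is, the product of the number of subgroups of order p^{s−1} and the number of subgroups of order p^s is congruent modulo p^2 to the number of chains U ≤ V ≤ G with |U| = p^{s−1} and |V| = p^s. -/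
/-!
Write `|G| = p ^ s * m` and let `G` translate its subsets of size `p ^ s`, as in Wielandt's proof of
Sylow's theorem. The order of each stabilizer divides `p ^ s`, so every orbit has size `p ^ i * m`
with `i ≤ s`, and modulo `p ^ 2 * m` only the subsets whose stabilizer has order `p ^ s` or
`p ^ (s - 1)` count. These are detected by the subgroups of order `p ^ s` or `p ^ (s - 1)` inside
the stabilizer, and any such subgroup fixes a number of subsets that depends only on its order.
After division by `m` this yields a congruence modulo `p ^ 2` between `N(s)`, `N(s - 1)`,
`N(s - 1, s)` and two binomial coefficients in `p`, `s` and `m`. For the cyclic group of order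
`p ^ s * m`, where all these counts are `1`, it says that the two binomial coefficients agree, say
with `e`, so that `e + N(s - 1, s) ≡ N(s) + N(s - 1) * e`. The same argument modulo `p` gives
`N(s) ≡ N(s - 1) ≡ e ≡ 1`, whence `(N(s - 1) - 1) * (N(s) - e) ≡ 0` modulo `p ^ 2`.
-/

open MulAction
open scoped Pointwise

section FreeAction

variable {G α : Type*} [Group G] [MulAction G α]

theorem card_orbitRel_quotient_of_isCancelSMul [IsCancelSMul G α] [Finite G] :
    Nat.card (orbitRel.Quotient G α) = Nat.card α / Nat.card G := by
  rw [Nat.card_congr (selfEquivOrbitsQuotientProd (G := G) (X := α)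
    IsCancelSMul.stabilizer_eq_bot), Nat.card_prod, Nat.mul_div_cancel _ Nat.card_pos]

section Fintype

variable [Fintype α]

open Classical in
/-- The union of a finite set of orbits; it encodes an invariant finite subset by the orbits it is
made of. -/
noncomputable def orbitUnion (Y : Finset (orbitRel.Quotient G α)) : Finset α :=
  {a | ⟦a⟧ ∈ Y}

@[simp]
theorem mem_orbitUnion {Y : Finset (orbitRel.Quotient G α)} {a : α} :
    a ∈ orbitUnion Y ↔ ⟦a⟧ ∈ Y := by
  simp [orbitUnion]

theorem orbitUnion_injective :
    Function.Injective (orbitUnion : Finset (orbitRel.Quotient G α) → Finset α) := by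
  intro Y Z h
  ext ω
  induction ω using Quotient.inductionOn with
  | h a => simpa using Finset.ext_iff.mp h a

theorem card_orbitUnion [IsCancelSMul G α] (Y : Finset (orbitRel.Quotient G α)) :
    (orbitUnion Y).card = Nat.card G * Y.card := by
  classical
  have card_fiber : ∀ ω ∈ Y, {a ∈ orbitUnion Y | (⟦a⟧ : orbitRel.Quotient G α) = ω}.card =
      Nat.card G := by
    intro ω hω
    induction ω using Quotient.inductionOn with
    | h b =>
      have fiber_eq_orbit :
          ({a ∈ orbitUnion Y | (⟦a⟧ : orbitRel.Quotient G α) = ⟦b⟧} : Set α) = orbit G b := by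
        ext a
        simp only [Set.mem_ofPred_eq, mem_orbitUnion, Quotient.eq]
        exact ⟨fun h => h.2, fun h => ⟨by rwa [Quotient.sound h], h⟩⟩
      rw [← Set.ncard_coe_finset, Finset.coe_filter, fiber_eq_orbit, ← index_stabilizer,
        IsCancelSMul.stabilizer_eq_bot, Subgroup.index_bot]
  rw [Finset.card_eq_sum_card_fiberwise fun _ => mem_orbitUnion.mp, Finset.sum_const_nat card_fiber,
    mul_comm]

variable [DecidableEq α]

theorem smul_orbitUnion (g : G) (Y : Finset (orbitRel.Quotient G α)) :
    g • orbitUnion Y = orbitUnion Y := by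
  ext a
  have same_orbit : (⟦g⁻¹ • a⟧ : orbitRel.Quotient G α) = ⟦a⟧ := Quotient.sound (mem_orbit a g⁻¹)
  rw [← Finset.inv_smul_mem_iff, mem_orbitUnion, mem_orbitUnion, same_orbit]

theorem exists_orbitUnion_eq_iff {S : Finset α} :
    (∃ Y : Finset (orbitRel.Quotient G α), orbitUnion Y = S) ↔ ∀ g : G, g • S = S := by
  classical
  refine ⟨fun ⟨Y, hY⟩ g => hY ▸ smul_orbitUnion g Y, fun hS => ⟨S.image (⟦·⟧), ?_⟩⟩
  ext a
  rw [mem_orbitUnion, Finset.mem_image]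
  refine ⟨fun ⟨b, hb, hba⟩ => ?_, fun ha => ⟨a, ha, rfl⟩⟩
  obtain ⟨g, rfl⟩ := Quotient.exact hba
  rwa [← hS g, Finset.smul_mem_smul_finset_iff] at hb

theorem le_stabilizer_powersetCard_iff {H : Subgroup G} {k : ℕ} {S : Set.powersetCard α k} :
    H ≤ stabilizer G S ↔ ∃ Y : Finset (orbitRel.Quotient H α), orbitUnion Y = (S : Finset α) := by
  rw [exists_orbitUnion_eq_iff, Subtype.forall]
  refine forall₂_congr fun h _ => ?_
  rw [mem_stabilizer_iff, Subtype.ext_iff, Set.powersetCard.coe_smul]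
  rfl

end Fintype

variable [Finite α] [DecidableEq α] [IsCancelSMul G α]

theorem card_stabilizer_powersetCard_dvd {k : ℕ} (S : Set.powersetCard α k) :
    Nat.card (stabilizer G S) ∣ k := by
  have := Fintype.ofFinite α
  obtain ⟨Y, hY⟩ := le_stabilizer_powersetCard_iff.mp (le_refl (stabilizer G S))
  exact ⟨Y.card, by rw [← card_orbitUnion, hY, Set.powersetCard.card_eq]⟩

theorem card_powersetCard_le_stabilizer (H : Subgroup G) [Finite H] (j : ℕ) :
    Nat.card {S : Set.powersetCard α (Nat.card H * j) // H ≤ stabilizer G S} =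
      (Nat.card α / Nat.card H).choose j := by
  have := Fintype.ofFinite α
  rw [← card_orbitRel_quotient_of_isCancelSMul, ← Set.powersetCard.card]
  let toInvariant (Y : Set.powersetCard (orbitRel.Quotient H α) j) :
      {S : Set.powersetCard α (Nat.card H * j) // H ≤ stabilizer G S} :=
    ⟨⟨orbitUnion Y.1, by rw [Set.powersetCard.mem_iff, card_orbitUnion, Set.powersetCard.card_eq]⟩,
      le_stabilizer_powersetCard_iff.mpr ⟨Y, rfl⟩⟩
  refine (Nat.card_congr (Equiv.ofBijective toInvariant ⟨fun Y Z h => ?_, fun S => ?_⟩)).symm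
  · exact Subtype.ext (orbitUnion_injective (congrArg (fun S => (S.1 : Finset α)) h))
  · obtain ⟨Y, hY⟩ := le_stabilizer_powersetCard_iff.mp S.2
    have card_Y : Y.card = j := by
      rw [← Nat.mul_right_inj (Nat.card_pos (α := H)).ne', ← card_orbitUnion, hY,
        Set.powersetCard.card_eq]
    exact ⟨⟨Y, card_Y⟩, Subtype.ext (Subtype.ext hY)⟩

end FreeAction

section OrbitCount

variable {G X : Type*} [Group G] [MulAction G X]

theorem sum_card_le_stabilizer {ι : Type*} [Finite ι] [Fintype X] (H : ι → Subgroup G) {F : ℕ}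
    (hF : ∀ i, Nat.card {x : X // H i ≤ stabilizer G x} = F) :
    ∑ x : X, Nat.card {i // H i ≤ stabilizer G x} = Nat.card ι * F := by
  classical
  have := Fintype.ofFinite ι
  simp only [Nat.card_eq_fintype_card, Fintype.card_subtype] at hF ⊢
  rw [← Finset.card_univ, ← Finset.sum_const_nat fun i _ => hF i]
  exact Finset.sum_card_bipartiteAbove_eq_sum_card_bipartiteBelow
    (fun (x : X) (i : ι) => H i ≤ stabilizer G x)

variable [Finite G] [Finite X]

theorem dvd_card_of_forall_mul_card_stabilizer_dvd {d : ℕ}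
    (h : ∀ x : X, d * Nat.card (stabilizer G x) ∣ Nat.card G) : d ∣ Nat.card X := by
  have := Fintype.ofFinite (orbitRel.Quotient G X)
  rw [Nat.card_congr (selfEquivSigmaOrbitsQuotientStabilizer G X), Nat.card_sigma]
  refine Finset.dvd_sum fun ω _ =>
    Nat.dvd_of_mul_dvd_mul_right (Nat.card_pos (α := stabilizer G ω.out)) ?_
  rw [← Subgroup.card_eq_card_quotient_mul_card_subgroup]
  exact h ω.out

theorem card_modEq_card_not_mul_card_stabilizer_dvd {q m : ℕ} (hG : Nat.card G = q * m) (d : ℕ) :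
    Nat.card X ≡ Nat.card {x : X // ¬ d * Nat.card (stabilizer G x) ∣ q} [MOD d * m] := by
  classical
  let S : SubMulAction G X :=
    { carrier := {x | d * Nat.card (stabilizer G x) ∣ q}
      smul_mem' := fun g x hx => by
        rwa [Set.mem_ofPred_eq, ← Nat.card_congr (stabilizerEquivStabilizer rfl).toEquiv] }
  have dvd_card_S : d * m ∣ Nat.card S :=
    dvd_card_of_forall_mul_card_stabilizer_dvd (G := G) fun x => by
      rw [SubMulAction.stabilizer_of_subMul, hG, mul_right_comm]
      exact Nat.mul_dvd_mul_right x.2 m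
  calc Nat.card X = Nat.card S + Nat.card {x // x ∉ S} := by
        rw [← Nat.card_congr (Equiv.sumCompl (· ∈ S)), Nat.card_sum]
    _ ≡ 0 + Nat.card {x // x ∉ S} [MOD d * m] :=
        (Nat.modEq_zero_iff_dvd.mpr dvd_card_S).add_right _
    _ = _ := zero_add _

end OrbitCount

/-- The subgroups of `G` of order `d`, so that `N(c)` is the cardinality of
`SubgroupOfCard G (p ^ c)`. -/
abbrev SubgroupOfCard (G : Type*) [Group G] (d : ℕ) : Type _ :=
  {U : Subgroup G // Nat.card U = d}

/-- The chains `U ≤ V` of subgroups of `G` with `|U| = d` and `|V| = e`, encoded as pairs `(U, V)`;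
`N(c₁, c₂)` is the cardinality of `SubgroupChain G (p ^ c₁) (p ^ c₂)`. -/
abbrev SubgroupChain (G : Type*) [Group G] (d e : ℕ) : Type _ :=
  {UV : Subgroup G × Subgroup G // UV.1 ≤ UV.2 ∧ Nat.card UV.1 = d ∧ Nat.card UV.2 = e}

section Below

variable {G : Type*} [Group G] {d e : ℕ} {K : Subgroup G}

theorem card_subgroupOfCard_le_of_not_dvd (hK : ¬ d ∣ Nat.card K) :
    Nat.card {U : SubgroupOfCard G d // U.1 ≤ K} = 0 := by
  have : IsEmpty {U : SubgroupOfCard G d // U.1 ≤ K} :=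
    ⟨fun U => hK (U.1.2 ▸ Subgroup.card_dvd_of_le U.2)⟩
  exact Nat.card_of_isEmpty

theorem card_subgroupChain_le_of_not_dvd (hK : ¬ e ∣ Nat.card K) :
    Nat.card {c : SubgroupChain G d e // c.1.2 ≤ K} = 0 := by
  have : IsEmpty {c : SubgroupChain G d e // c.1.2 ≤ K} :=
    ⟨fun c => hK (c.1.2.2.2 ▸ Subgroup.card_dvd_of_le c.2)⟩
  exact Nat.card_of_isEmpty

variable [Finite G]

theorem card_subgroupOfCard_le_of_card_eq (hK : Nat.card K = d) :
    Nat.card {U : SubgroupOfCard G d // U.1 ≤ K} = 1 :=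
  Nat.card_eq_one_iff_exists.mpr ⟨⟨⟨K, hK⟩, le_rfl⟩, fun U => Subtype.ext <| Subtype.ext <|
    Subgroup.eq_of_le_of_card_ge U.2 (hK.trans U.1.2.symm).le⟩

theorem card_subgroupChain_le_of_card_eq (hK : Nat.card K = e) :
    Nat.card {c : SubgroupChain G d e // c.1.2 ≤ K} =
      Nat.card {U : SubgroupOfCard G d // U.1 ≤ K} := by
  refine Nat.card_congr (Equiv.ofBijective
    (fun c => ⟨⟨c.1.1.1, c.1.2.2.1⟩, c.1.2.1.trans c.2⟩) ⟨?_, ?_⟩)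
  · intro c c' h
    have top_eq (c : {c : SubgroupChain G d e // c.1.2 ≤ K}) : c.1.1.2 = K :=
      Subgroup.eq_of_le_of_card_ge c.2 (hK.trans c.1.2.2.2.symm).le
    have bot_eq : c.1.1.1 = c'.1.1.1 := congrArg (fun U => U.1.1) h
    exact Subtype.ext (Subtype.ext (Prod.ext bot_eq ((top_eq c).trans (top_eq c').symm)))
  · rintro ⟨⟨U, hU⟩, hUK⟩
    exact ⟨⟨⟨(U, K), hUK, hU, hK⟩, le_rfl⟩, rfl⟩

theorem ite_add_card_subgroupChain_le {p r : ℕ} (hp : p.Prime) (hK : Nat.card K ∣ p ^ (r + 1)) :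
    (if ¬ p ^ 2 * Nat.card K ∣ p ^ (r + 1) then 1 else 0) +
        Nat.card {c : SubgroupChain G (p ^ r) (p ^ (r + 1)) // c.1.2 ≤ K} =
      Nat.card {V : SubgroupOfCard G (p ^ (r + 1)) // V.1 ≤ K} +
        Nat.card {U : SubgroupOfCard G (p ^ r) // U.1 ≤ K} := by
  obtain ⟨k, hk, hKk⟩ := (Nat.dvd_prime_pow hp).mp hK
  have not_dvd {j : ℕ} (hj : k < j) : ¬ p ^ j ∣ Nat.card K := by
    rw [hKk, Nat.pow_dvd_pow_iff_le_right hp.one_lt]; omega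
  have large_iff : ¬ p ^ 2 * Nat.card K ∣ p ^ (r + 1) ↔ r ≤ k := by
    rw [hKk, ← pow_add, Nat.pow_dvd_pow_iff_le_right hp.one_lt]; omega
  simp only [large_iff]
  obtain rfl | rfl | hkr : k = r + 1 ∨ k = r ∨ k < r := by omega
  · rw [if_pos r.le_succ, card_subgroupChain_le_of_card_eq hKk,
      card_subgroupOfCard_le_of_card_eq hKk]
  · rw [if_pos le_rfl, card_subgroupChain_le_of_not_dvd (not_dvd k.lt_succ_self),
      card_subgroupOfCard_le_of_not_dvd (not_dvd k.lt_succ_self),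
      card_subgroupOfCard_le_of_card_eq hKk]
  · rw [if_neg (not_le.mpr hkr), card_subgroupChain_le_of_not_dvd (not_dvd (by omega)),
      card_subgroupOfCard_le_of_not_dvd (not_dvd (by omega)),
      card_subgroupOfCard_le_of_not_dvd (not_dvd hkr)]

theorem ite_eq_card_subgroupOfCard_le {p s : ℕ} (hp : p.Prime) (hK : Nat.card K ∣ p ^ s) :
    (if ¬ p * Nat.card K ∣ p ^ s then 1 else 0) =
      Nat.card {V : SubgroupOfCard G (p ^ s) // V.1 ≤ K} := by
  obtain ⟨k, hk, hKk⟩ := (Nat.dvd_prime_pow hp).mp hK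
  have large_iff : ¬ p * Nat.card K ∣ p ^ s ↔ s ≤ k := by
    rw [hKk, ← pow_succ', Nat.pow_dvd_pow_iff_le_right hp.one_lt]; omega
  simp only [large_iff]
  obtain rfl | hks := hk.eq_or_lt
  · rw [if_pos le_rfl, card_subgroupOfCard_le_of_card_eq hKk]
  · have not_dvd : ¬ p ^ s ∣ Nat.card K := by
      rw [hKk, Nat.pow_dvd_pow_iff_le_right hp.one_lt]; omega
    rw [if_neg (not_le.mpr hks), card_subgroupOfCard_le_of_not_dvd not_dvd]

end Below

section ActionCongruence

variable {G X : Type*} [Group G] [Finite G] [MulAction G X] [Finite X] {p m : ℕ}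

theorem card_modEq_card_subgroupOfCard_mul {s F : ℕ} (hp : p.Prime) (hG : Nat.card G = p ^ s * m)
    (hX : ∀ x : X, Nat.card (stabilizer G x) ∣ p ^ s)
    (hF : ∀ V : SubgroupOfCard G (p ^ s), Nat.card {x : X // V.1 ≤ stabilizer G x} = F) :
    Nat.card X ≡ Nat.card (SubgroupOfCard G (p ^ s)) * F [MOD p * m] := by
  have := Fintype.ofFinite X
  calc Nat.card X
      ≡ Nat.card {x : X // ¬ p * Nat.card (stabilizer G x) ∣ p ^ s} [MOD p * m] :=
        card_modEq_card_not_mul_card_stabilizer_dvd hG p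
    _ = ∑ x : X, if ¬ p * Nat.card (stabilizer G x) ∣ p ^ s then 1 else 0 := by
        rw [Nat.card_eq_fintype_card, Fintype.card_subtype, Finset.card_filter]
    _ = ∑ x : X, Nat.card {V : SubgroupOfCard G (p ^ s) // V.1 ≤ stabilizer G x} :=
        Finset.sum_congr rfl fun x _ => ite_eq_card_subgroupOfCard_le hp (hX x)
    _ = Nat.card (SubgroupOfCard G (p ^ s)) * F := sum_card_le_stabilizer _ hF

theorem card_add_card_subgroupChain_mul_modEq {r F F' : ℕ} (hp : p.Prime)
    (hG : Nat.card G = p ^ (r + 1) * m)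
    (hX : ∀ x : X, Nat.card (stabilizer G x) ∣ p ^ (r + 1))
    (hF : ∀ V : SubgroupOfCard G (p ^ (r + 1)), Nat.card {x : X // V.1 ≤ stabilizer G x} = F)
    (hF' : ∀ U : SubgroupOfCard G (p ^ r), Nat.card {x : X // U.1 ≤ stabilizer G x} = F') :
    Nat.card X + Nat.card (SubgroupChain G (p ^ r) (p ^ (r + 1))) * F ≡
      Nat.card (SubgroupOfCard G (p ^ (r + 1))) * F + Nat.card (SubgroupOfCard G (p ^ r)) * F'
        [MOD p ^ 2 * m] := by
  have := Fintype.ofFinite X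
  have sum_chains := sum_card_le_stabilizer
    (fun c : SubgroupChain G (p ^ r) (p ^ (r + 1)) => c.1.2) fun c => hF ⟨c.1.2, c.2.2.2⟩
  calc Nat.card X + Nat.card (SubgroupChain G (p ^ r) (p ^ (r + 1))) * F
      ≡ Nat.card {x : X // ¬ p ^ 2 * Nat.card (stabilizer G x) ∣ p ^ (r + 1)} +
          Nat.card (SubgroupChain G (p ^ r) (p ^ (r + 1))) * F [MOD p ^ 2 * m] :=
        (card_modEq_card_not_mul_card_stabilizer_dvd hG (p ^ 2)).add_right _
    _ = ∑ x : X, ((if ¬ p ^ 2 * Nat.card (stabilizer G x) ∣ p ^ (r + 1) then 1 else 0) +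
          Nat.card {c : SubgroupChain G (p ^ r) (p ^ (r + 1)) // c.1.2 ≤ stabilizer G x}) := by
        rw [Finset.sum_add_distrib, sum_chains, Nat.card_eq_fintype_card, Fintype.card_subtype,
          Finset.card_filter]
    _ = ∑ x : X, (Nat.card {V : SubgroupOfCard G (p ^ (r + 1)) // V.1 ≤ stabilizer G x} +
          Nat.card {U : SubgroupOfCard G (p ^ r) // U.1 ≤ stabilizer G x}) :=
        Finset.sum_congr rfl fun x _ => ite_add_card_subgroupChain_le hp (hX x)
    _ = Nat.card (SubgroupOfCard G (p ^ (r + 1))) * F +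
          Nat.card (SubgroupOfCard G (p ^ r)) * F' := by
        rw [Finset.sum_add_distrib, sum_card_le_stabilizer _ hF, sum_card_le_stabilizer _ hF']

end ActionCongruence

section SubgroupCongruence

theorem card_powersetCard_of_card_eq_mul {α : Type*} {k m : ℕ} (hk : k ≠ 0)
    (hα : Nat.card α = k * m) :
    Nat.card (Set.powersetCard α k) = (m * k - 1).choose (k - 1) * m := by
  rw [Set.powersetCard.card, hα, mul_comm k, Nat.choose_mul_right hk, mul_comm]

variable {G : Type*} [Group G] [Finite G] {p m : ℕ}

open Classical in
theorem card_powersetCard_le_stabilizer_of_card_eq_mul {U : Subgroup G} {k j : ℕ}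
    (hG : Nat.card G = Nat.card U * m) (hk : k = Nat.card U * j) :
    Nat.card {S : Set.powersetCard G k // U ≤ stabilizer G S} = m.choose j := by
  subst hk
  rw [card_powersetCard_le_stabilizer, hG, Nat.mul_div_cancel_left _ Nat.card_pos]

open Classical in
theorem card_powersetCard_le_stabilizer_subgroupOfCard {d : ℕ} (hG : Nat.card G = d * m)
    (V : SubgroupOfCard G d) :
    Nat.card {S : Set.powersetCard G d // V.1 ≤ stabilizer G S} = m := by
  rw [card_powersetCard_le_stabilizer_of_card_eq_mul (m := m) (j := 1) (by rw [V.2, hG])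
    (by rw [V.2, mul_one]), Nat.choose_one_right]

theorem choose_modEq_card_subgroupOfCard {s : ℕ} (hp : p.Prime) (hG : Nat.card G = p ^ s * m) :
    (m * p ^ s - 1).choose (p ^ s - 1) ≡ Nat.card (SubgroupOfCard G (p ^ s)) [MOD p] := by
  classical
  have hm : m ≠ 0 := right_ne_zero_of_mul (hG ▸ Nat.card_pos.ne')
  apply Nat.ModEq.mul_right_cancel' hm
  rw [← card_powersetCard_of_card_eq_mul (pow_ne_zero s hp.ne_zero) hG]
  exact card_modEq_card_subgroupOfCard_mul hp hG card_stabilizer_powersetCard_dvd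
    (card_powersetCard_le_stabilizer_subgroupOfCard hG)

theorem choose_add_card_subgroupChain_modEq {r : ℕ} (hp : p.Prime)
    (hG : Nat.card G = p ^ (r + 1) * m) :
    (m * p ^ (r + 1) - 1).choose (p ^ (r + 1) - 1) +
        Nat.card (SubgroupChain G (p ^ r) (p ^ (r + 1))) ≡
      Nat.card (SubgroupOfCard G (p ^ (r + 1))) +
        Nat.card (SubgroupOfCard G (p ^ r)) * (m * p - 1).choose (p - 1) [MOD p ^ 2] := by
  classical
  have hm : m ≠ 0 := right_ne_zero_of_mul (hG ▸ Nat.card_pos.ne')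
  have card_fixed (U : SubgroupOfCard G (p ^ r)) :
      Nat.card {S : Set.powersetCard G (p ^ (r + 1)) // U.1 ≤ stabilizer G S} =
        (m * p - 1).choose (p - 1) * m := by
    rw [card_powersetCard_le_stabilizer_of_card_eq_mul (m := m * p) (j := p)
      (by rw [U.2, hG]; ring) (by rw [U.2, pow_succ]), Nat.choose_mul_right hp.ne_zero, mul_comm]
  apply Nat.ModEq.mul_right_cancel' hm
  rw [add_mul, add_mul, mul_assoc (Nat.card _),
    ← card_powersetCard_of_card_eq_mul (pow_ne_zero _ hp.ne_zero) hG]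
  exact card_add_card_subgroupChain_mul_modEq hp hG card_stabilizer_powersetCard_dvd
    (card_powersetCard_le_stabilizer_subgroupOfCard hG) card_fixed

end SubgroupCongruence

section Cyclic

variable {C : Type*} [CommGroup C] [IsCyclic C] [Finite C] {d e : ℕ}

theorem card_eq_iff_eq_ker_powMonoidHom (hd : d ∣ Nat.card C) {U : Subgroup C} :
    Nat.card U = d ↔ U = (powMonoidHom d : C →* C).ker := by
  have card_ker : Nat.card (powMonoidHom d : C →* C).ker = d := by
    rw [IsCyclic.card_powMonoidHom_ker, Nat.gcd_eq_right hd]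
  refine ⟨fun hU => Subgroup.eq_of_le_of_card_ge (fun x hx => ?_) (card_ker.trans hU.symm).le, ?_⟩
  · rw [MonoidHom.mem_ker, powMonoidHom_apply, ← hU]
    exact orderOf_dvd_iff_pow_eq_one.mp (U.orderOf_dvd_natCard hx)
  · rintro rfl
    exact card_ker

theorem card_subgroupOfCard_of_isCyclic (hd : d ∣ Nat.card C) :
    Nat.card (SubgroupOfCard C d) = 1 := by
  simp only [SubgroupOfCard, card_eq_iff_eq_ker_powMonoidHom hd, Nat.card_unique]

theorem card_subgroupChain_of_isCyclic (hde : d ∣ e) (he : e ∣ Nat.card C) :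
    Nat.card (SubgroupChain C d e) = 1 := by
  have ker_le : (powMonoidHom d : C →* C).ker ≤ (powMonoidHom e : C →* C).ker := fun x hx => by
    obtain ⟨k, rfl⟩ := hde
    rw [MonoidHom.mem_ker, powMonoidHom_apply] at hx ⊢
    rw [pow_mul, hx, one_pow]
  rw [Nat.card_eq_one_iff_exists]
  refine ⟨⟨(_, _), ker_le, (card_eq_iff_eq_ker_powMonoidHom (hde.trans he)).mpr rfl,
    (card_eq_iff_eq_ker_powMonoidHom he).mpr rfl⟩, fun ⟨(U, V), _, hU, hV⟩ => ?_⟩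
  rw [card_eq_iff_eq_ker_powMonoidHom (hde.trans he)] at hU
  rw [card_eq_iff_eq_ker_powMonoidHom he] at hV
  exact Subtype.ext (Prod.ext hU hV)

end Cyclic

section Consequences

variable {p m : ℕ}

theorem choose_mul_prime_pow_sub_one_modEq_one (hp : p.Prime) (hm : m ≠ 0) (s : ℕ) :
    (m * p ^ s - 1).choose (p ^ s - 1) ≡ 1 [MOD p] := by
  have : NeZero (p ^ s * m) := ⟨mul_ne_zero (pow_pos hp.pos s).ne' hm⟩
  have hC : Nat.card (Multiplicative (ZMod (p ^ s * m))) = p ^ s * m := Nat.card_zmod _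
  simpa only [card_subgroupOfCard_of_isCyclic (Dvd.intro m hC.symm)] using
    choose_modEq_card_subgroupOfCard hp hC

theorem choose_mul_prime_pow_succ_sub_one_modEq (hp : p.Prime) (hm : m ≠ 0) (r : ℕ) :
    (m * p ^ (r + 1) - 1).choose (p ^ (r + 1) - 1) ≡ (m * p - 1).choose (p - 1) [MOD p ^ 2] := by
  have : NeZero (p ^ (r + 1) * m) := ⟨mul_ne_zero (pow_pos hp.pos _).ne' hm⟩
  have hC : Nat.card (Multiplicative (ZMod (p ^ (r + 1) * m))) = p ^ (r + 1) * m := Nat.card_zmod _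
  have pow_dvd : p ^ r ∣ p ^ (r + 1) := pow_dvd_pow p r.le_succ
  have pow_succ_dvd := Dvd.intro m hC.symm
  have count := choose_add_card_subgroupChain_modEq hp hC
  rw [card_subgroupChain_of_isCyclic pow_dvd pow_succ_dvd,
    card_subgroupOfCard_of_isCyclic pow_succ_dvd,
    card_subgroupOfCard_of_isCyclic (pow_dvd.trans pow_succ_dvd), one_mul, add_comm] at count
  exact Nat.ModEq.add_left_cancel' 1 count

variable {G : Type*} [Group G] [Finite G]

theorem card_subgroupOfCard_prime_pow_modEq_one {s : ℕ} (hp : p.Prime)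
    (hs : p ^ s ∣ Nat.card G) : Nat.card (SubgroupOfCard G (p ^ s)) ≡ 1 [MOD p] := by
  obtain ⟨m, hG⟩ := hs
  have hm : m ≠ 0 := right_ne_zero_of_mul (hG ▸ Nat.card_pos.ne')
  exact (choose_modEq_card_subgroupOfCard hp hG).symm.trans
    (choose_mul_prime_pow_sub_one_modEq_one hp hm s)

end Consequences

theorem mul_modEq_of_add_modEq_add_mul {p a b e x : ℕ} (ha : a ≡ 1 [MOD p]) (hb : b ≡ e [MOD p])
    (h : e + x ≡ b + a * e [MOD p ^ 2]) : a * b ≡ x [MOD p ^ 2] := by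
  have prod_dvd : (p : ℤ) ^ 2 ∣ (1 - a) * (e - b) := by
    rw [pow_two]
    exact mod_cast mul_dvd_mul ha.dvd hb.dvd
  rw [Nat.modEq_iff_dvd] at h ⊢
  push_cast at h ⊢
  have difference : (x : ℤ) - a * b = -((b + a * e - (e + x)) + (1 - a) * (e - b)) := by ring
  rw [difference, dvd_neg]
  exact dvd_add h prod_dvd

/-- For `s ∈ [1, t]`, the product `N(s-1)·N(s)` of the number of subgroups of order
`p^(s-1)` and the number of subgroups of order `p^s` is congruent modulo `p²` to the
number `N(s-1, s)` of chains `U ≤ V ≤ G` with `|U| = p^(s-1)` and `|V| = p^s`. -/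
theorem prod_count_congruent_chain_count {G : Type*} [Group G] [Finite G]
    (p t n s : ℕ) (hp : p.Prime) (hG : Nat.card G = p ^ t * n) (hn : ¬ p ∣ n)
    (hs1 : 1 ≤ s) (hst : s ≤ t) :
    Nat.card {U : Subgroup G // Nat.card U = p ^ (s - 1)} *
        Nat.card {U : Subgroup G // Nat.card U = p ^ s}
      ≡ Nat.card {uv : Subgroup G × Subgroup G //
          uv.1 ≤ uv.2 ∧ Nat.card uv.1 = p ^ (s - 1) ∧ Nat.card uv.2 = p ^ s}
        [MOD p ^ 2] := by
  obtain ⟨r, rfl⟩ := Nat.exists_eq_add_of_le' hs1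
  rw [Nat.add_sub_cancel]
  have pow_succ_dvd : p ^ (r + 1) ∣ Nat.card G := hG ▸ (pow_dvd_pow p hst).mul_right n
  have pow_dvd : p ^ r ∣ Nat.card G := (pow_dvd_pow p r.le_succ).trans pow_succ_dvd
  obtain ⟨m, hm⟩ := pow_succ_dvd
  have m_ne_zero : m ≠ 0 := right_ne_zero_of_mul (hm ▸ Nat.card_pos.ne')
  have choose_modEq_one : (m * p - 1).choose (p - 1) ≡ 1 [MOD p] := by
    simpa only [pow_one] using choose_mul_prime_pow_sub_one_modEq_one hp m_ne_zero 1
  apply mul_modEq_of_add_modEq_add_mul (e := (m * p - 1).choose (p - 1))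
  · exact card_subgroupOfCard_prime_pow_modEq_one hp pow_dvd
  · exact (card_subgroupOfCard_prime_pow_modEq_one hp ⟨m, hm⟩).trans choose_modEq_one.symm
  · exact ((choose_mul_prime_pow_succ_sub_one_modEq hp m_ne_zero r).symm.add_right _).trans
      (choose_add_card_subgroupChain_modEq hp hm)
end
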